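/- arXiv:1609.09796 — 2 statements merged into one kernel-verified Lean document; each statement's English description precedes it below -/
import Mathlib

section
/- Let q ≥ 1 and let D be a symmetric n×n Monge matrix with n ≥ 2q+1. Then the permutation σ that first traverses the odd cities in increasing order and then traverses the even cities in decreasing order (formally σ(i) = 2i−1 for 1 ≤ i ≤ ⌈n/2⌉ and σ(i) = 2(n−i+1) for ⌈n/2⌉ < i ≤ n) minimizes the q-stripe TSP objective: F_q(σ) ≤ F_q(π) for every permutation π of {1,…,n}. -/
/-- Cyclic shift: the city `p` steps after position `i` in the circular order on `Fin n`. -/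
def finShift {n : ℕ} (i : Fin n) (p : ℕ) : Fin n :=
  ⟨(i.val + p) % n, Nat.mod_lt _ i.pos⟩

/-- The `q`-stripe TSP objective: `∑_{p=1}^{q} ∑_{i=1}^{n} d(π(i), π(i+p))`,
indices taken cyclically modulo `n`. -/
noncomputable def stripeObj (q : ℕ) {n : ℕ} (D : Fin n → Fin n → ℝ)
    (π : Equiv.Perm (Fin n)) : ℝ :=
  ∑ p ∈ Finset.Icc 1 q, ∑ i : Fin n, D (π i) (π (finShift i p))

/-- `D` is a Monge matrix: `d(i,j) + d(r,s) ≤ d(i,s) + d(r,j)` for all `i < r`, `j < s`. -/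
def MongeMat {n : ℕ} (D : Fin n → Fin n → ℝ) : Prop :=
  ∀ i r j s : Fin n, i < r → j < s → D i j + D r s ≤ D i s + D r j

/-!
Symmetry gives `2 F_q(π) + ∑ i, d(i, i) = ∑ d(π(x), π(y))`, the sum running over all ordered pairs
of positions at cyclic distance at most `q`. Summation by parts in both arguments writes a Monge
matrix as a row function plus a column function plus a nonpositive combination of the threshold
matrices `[a < k] [b < l]`. So it suffices that, for all thresholds `k` and `l` simultaneously, `σ`
maximizes the number of pairs of positions at distance at most `q` of which the first carries one of
the `k` smallest cities and the second one of the `l` smallest.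

For sets `A` and `B` of `k` and `l` positions and `m = 2 q + 1`, counting up to a level `t` in each
window of length `m` bounds the number of such pairs by `t k + (l - t) (m - t)`; the second term is
an interval case of Pollard's theorem, a consequence of the fact that the total excess over `t` is
a convex function of the window length. For `σ` the smallest cities form nested arcs, and the window
counts are explicit enough to attain the bound for a suitable `t`.
-/

open Finset

variable {n : ℕ}

/-! ### Cyclic shifts -/

theorem finShift_add (x : Fin n) (a b : ℕ) : finShift x (a + b) = finShift (finShift x a) b := by
  ext
  simp [finShift, add_assoc]

theorem finShift_injective (p : ℕ) : Function.Injective fun x : Fin n ↦ finShift x p := by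
  intro x y h
  have h_mod : (x : ℕ) + p ≡ y + p [MOD n] := congrArg Fin.val h
  exact Fin.ext ((Nat.ModEq.add_right_cancel' p h_mod).eq_of_lt_of_lt x.isLt y.isLt)

theorem finShift_bijective (p : ℕ) : Function.Bijective fun x : Fin n ↦ finShift x p :=
  Finite.injective_iff_bijective.mp (finShift_injective p)

section Sums

variable {M : Type*} [AddCommMonoid M]

theorem sum_finShift (f : Fin n → M) (p : ℕ) : ∑ x, f (finShift x p) = ∑ x, f x :=
  (finShift_bijective p).sum_comp f

theorem sum_range_finShift (f : Fin n → M) (x : Fin n) :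
    ∑ d ∈ range n, f (finShift x d) = ∑ y, f y := by
  have h_comm (d : Fin n) : finShift x d = finShift d x := by
    simp [finShift, add_comm]
  rw [sum_range, ← sum_finShift f x]
  simp only [h_comm]

theorem sum_perm_finShift (π : Equiv.Perm (Fin n)) (p : ℕ) (f : Fin n → M) :
    ∑ x, f (π (finShift x p)) = ∑ i, f i := by
  rw [sum_finShift fun x ↦ f (π x), Equiv.sum_comp π f]

end Sums

/-! ### Windows -/

/-- The number of elements of `B` among the `m` consecutive positions `x, x + 1, …, x + m - 1` of
the cyclic order. Positions are counted with multiplicity when `m > n`. -/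
def arcCount (B : Finset (Fin n)) (x : Fin n) (m : ℕ) : ℕ :=
  #{d ∈ range m | finShift x d ∈ B}

theorem arcCount_succ (B : Finset (Fin n)) (x : Fin n) (m : ℕ) :
    arcCount B x (m + 1) = arcCount B x m + if finShift x m ∈ B then 1 else 0 := by
  simp only [arcCount, card_filter, sum_range_succ]

theorem arcCount_finShift_one_le (B : Finset (Fin n)) (x : Fin n) (m : ℕ) :
    arcCount B (finShift x 1) m ≤ arcCount B x (m + 1) := by
  simp only [arcCount, card_filter, sum_range_succ', ← finShift_add, add_comm 1]
  exact Nat.le_add_right _ _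

theorem arcCount_le (B : Finset (Fin n)) (x : Fin n) (m : ℕ) : arcCount B x m ≤ m :=
  (card_filter_le _ _).trans_eq (card_range m)

theorem arcCount_add_le (B : Finset (Fin n)) (x : Fin n) (m a : ℕ) :
    arcCount B x (m + a) ≤ arcCount B x m + a := by
  induction a with
  | zero => rfl
  | succ a ih =>
    rw [← add_assoc, arcCount_succ]
    split_ifs <;> omega

theorem arcCount_full (B : Finset (Fin n)) (x : Fin n) : arcCount B x n = #B := by
  rw [arcCount, card_filter, sum_range_finShift fun y ↦ if y ∈ B then 1 else 0]
  simp

theorem card_add_le_arcCount_add (B : Finset (Fin n)) (x : Fin n) {m : ℕ} (hm : m ≤ n) :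
    #B + m ≤ arcCount B x m + n := by
  have h := arcCount_add_le B x m (n - m)
  rw [Nat.add_sub_cancel' hm, arcCount_full] at h
  omega

theorem sum_arcCount (B : Finset (Fin n)) (m : ℕ) : ∑ x, arcCount B x m = m * #B := by
  simp only [arcCount, card_filter]
  rw [sum_comm]
  simp [sum_finShift fun y ↦ if y ∈ B then 1 else 0]

/-! ### Pollard's inequality for windows -/

theorem nsmul_sum_range_le_nsmul_sum_range_of_monotone {M : Type*} [AddCommMonoid M]
    [PartialOrder M] [IsOrderedAddMonoid M] {f : ℕ → M} (hf : Monotone f) {a b : ℕ} (hab : a ≤ b) :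
    b • ∑ i ∈ range a, f i ≤ a • ∑ i ∈ range b, f i := by
  obtain ⟨c, rfl⟩ := Nat.exists_eq_add_of_le hab
  have h_head : ∑ i ∈ range a, f i ≤ a • f a := by
    simpa using sum_le_card_nsmul (range a) f (f a) fun i hi ↦ hf (mem_range.mp hi).le
  have h_tail : c • f a ≤ ∑ i ∈ range c, f (a + i) := by
    simpa using card_nsmul_le_sum (range c) (fun i ↦ f (a + i)) (f a)
      fun i _ ↦ hf (Nat.le_add_right a i)
  rw [sum_range_add, add_nsmul, nsmul_add]
  gcongr _ + ?_
  calc c • ∑ i ∈ range a, f i ≤ c • a • f a := nsmul_le_nsmul_right h_head c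
    _ = a • c • f a := nsmul_left_comm _ _ _
    _ ≤ a • ∑ i ∈ range c, f (a + i) := nsmul_le_nsmul_right h_tail a

/-- The number of windows of length `d` that already hold `t` elements of `B` and gain one more
when extended by one position: the increment of the total excess `∑ x, (arcCount B x d - t)`. -/
def excessIncrement (B : Finset (Fin n)) (t d : ℕ) : ℕ :=
  #{x | t ≤ arcCount B x d ∧ finShift x d ∈ B}

theorem excessIncrement_monotone (B : Finset (Fin n)) (t : ℕ) :
    Monotone (excessIncrement B t) := by
  refine monotone_nat_of_le_succ fun d ↦ ?_
  simp only [excessIncrement, card_filter]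
  rw [← sum_finShift _ 1]
  refine sum_le_sum fun x _ ↦ ?_
  have h_le := arcCount_finShift_one_le B x d
  rw [← finShift_add, add_comm 1 d]
  grind

theorem sum_arcCount_sub_eq_sum_excessIncrement (B : Finset (Fin n)) (t r : ℕ) :
    ∑ x, (arcCount B x (t + r) - t) = ∑ i ∈ range r, excessIncrement B t (t + i) := by
  induction r with
  | zero => simp [Nat.sub_eq_zero_of_le (arcCount_le B _ t)]
  | succ r ih =>
    rw [sum_range_succ, ← ih, excessIncrement, card_filter, ← sum_add_distrib]
    refine sum_congr rfl fun x _ ↦ ?_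
    rw [← add_assoc, arcCount_succ]
    grind

theorem sum_arcCount_sub_of_length_eq (B : Finset (Fin n)) {t : ℕ} (ht : t ≤ #B) :
    ∑ x, (arcCount B x (t + (n - #B)) - t) = (n - #B) * (#B - t) := by
  have hBn : #B ≤ n := card_finset_fin_le B
  have h_level (x : Fin n) : t ≤ arcCount B x (t + (n - #B)) := by
    have := card_add_le_arcCount_add B x (m := t + (n - #B)) (by omega)
    omega
  have h_total : ∑ x, (arcCount B x (t + (n - #B)) - t) + n * t = (t + (n - #B)) * #B := by
    rw [← sum_arcCount, ← sum_congr rfl fun x _ ↦ Nat.sub_add_cancel (h_level x)]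
    simp [sum_add_distrib]
  have h_split : (n - #B) * (#B - t) + n * t = (t + (n - #B)) * #B := by
    zify [hBn, ht]
    ring
  omega

theorem sum_arcCount_sub_le (B : Finset (Fin n)) {m t : ℕ} (ht : t ≤ #B) (htm : t ≤ m)
    (hm : #B + m ≤ n + t) : ∑ x, (arcCount B x m - t) ≤ (#B - t) * (m - t) := by
  obtain ⟨r, rfl⟩ := Nat.exists_eq_add_of_le htm
  have hr : r ≤ n - #B := by omega
  have h_convex := nsmul_sum_range_le_nsmul_sum_range_of_monotone
    ((excessIncrement_monotone B t).comp fun i j (hij : i ≤ j) ↦ Nat.add_le_add_left hij t) hr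
  simp only [Function.comp_apply, ← sum_arcCount_sub_eq_sum_excessIncrement,
    sum_arcCount_sub_of_length_eq B ht, smul_eq_mul] at h_convex
  rw [Nat.add_sub_cancel_left]
  rcases Nat.eq_zero_or_pos (n - #B) with h_zero | h_pos
  · obtain rfl : r = 0 := by omega
    simp [Nat.sub_eq_zero_of_le (arcCount_le B _ t)]
  · refine Nat.le_of_mul_le_mul_left (h_convex.trans_eq ?_) h_pos
    ring

theorem sum_arcCount_le (A B : Finset (Fin n)) {m t : ℕ} (ht : t ≤ #B) (htm : t ≤ m)
    (hm : #B + m ≤ n + t) : ∑ x ∈ A, arcCount B x m ≤ t * #A + (#B - t) * (m - t) :=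
  calc ∑ x ∈ A, arcCount B x m
      ≤ ∑ x ∈ A, (t + (arcCount B x m - t)) := sum_le_sum fun _ _ ↦ le_add_tsub
    _ = t * #A + ∑ x ∈ A, (arcCount B x m - t) := by simp [sum_add_distrib, mul_comm]
    _ ≤ t * #A + ∑ x, (arcCount B x m - t) := by gcongr; exact subset_univ A
    _ ≤ t * #A + (#B - t) * (m - t) := by gcongr; exact sum_arcCount_sub_le B ht htm hm

/-! ### Counting pairs of nearby small cities -/

/-- The positions at which the tour `π` visits the cities `0, …, k - 1`. -/
def positionsBelow (π : Equiv.Perm (Fin n)) (k : ℕ) : Finset (Fin n) :=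
  {x | (π x : ℕ) < k}

theorem mem_positionsBelow {π : Equiv.Perm (Fin n)} {k : ℕ} {x : Fin n} :
    x ∈ positionsBelow π k ↔ (π x : ℕ) < k := by
  simp [positionsBelow]

theorem card_positionsBelow (π : Equiv.Perm (Fin n)) {k : ℕ} (hk : k ≤ n) :
    #(positionsBelow π k) = k := by
  rw [positionsBelow, card_filter, Equiv.sum_comp π fun i ↦ if (i : ℕ) < k then 1 else 0,
    ← card_filter, Fin.card_filter_val_lt, min_eq_right hk]

/-- The number of ordered pairs of positions at cyclic distance at most `q` whose first member
carries a city below `k` and whose second member carries a city below `l`. A pair is encoded by the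
start `x` of the window of length `2 * q + 1` centred at its first member. -/
def nearbyCount (q : ℕ) (π : Equiv.Perm (Fin n)) (k l : ℕ) : ℕ :=
  ∑ x with finShift x q ∈ positionsBelow π k, arcCount (positionsBelow π l) x (2 * q + 1)

theorem nearbyCount_le (q : ℕ) (π : Equiv.Perm (Fin n)) {k l t : ℕ} (hk : k ≤ n) (hl : l ≤ n)
    (ht : t ≤ l) (htq : t ≤ 2 * q + 1) (hq : l + (2 * q + 1) ≤ n + t) :
    nearbyCount q π k l ≤ t * k + (l - t) * (2 * q + 1 - t) := by
  have h_card : #{x | finShift x q ∈ positionsBelow π k} = k := by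
    rw [card_filter, sum_finShift fun x ↦ if x ∈ positionsBelow π k then 1 else 0, ← card_filter]
    simpa using card_positionsBelow π hk
  have h_bound := sum_arcCount_le {x | finShift x q ∈ positionsBelow π k} (positionsBelow π l)
    (m := 2 * q + 1) (t := t)
  rw [h_card, card_positionsBelow π hl] at h_bound
  exact h_bound ht htq hq

/-! ### The Supnick tour -/

/-- The Supnick tour of `n` cities, with positions and cities numbered from `0`. -/
def IsSupnick (σ : Equiv.Perm (Fin n)) : Prop :=
  ∀ i : Fin n, (σ i : ℕ) = if (i : ℕ) < (n + 1) / 2 then 2 * (i : ℕ) else 2 * (n - 1 - i) + 1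

/-- The number of cities below `l` in the window of odd length `m ≤ n` centred at city `j` of the
Supnick tour of `n` cities. -/
def supnickArcCount (n m l j : ℕ) : ℕ :=
  max (l + m - n) (min (min l m) ((l + m - j) / 2))

/-- Positions are unwrapped to natural numbers so that the arc of small cities, which surrounds
the position `0`, becomes an interval around `n`. -/
theorem IsSupnick.apply_lt_of_mem_arc {σ : Equiv.Perm (Fin n)} (hσ : IsSupnick σ) {l p : ℕ}
    (hl : l ≤ n) (h_left : n ≤ p + l / 2) (h_right : p < n + (l + 1) / 2) {i : Fin n}
    (hi : (i : ℕ) = p % n) :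
    (σ i : ℕ) < l := by
  rw [hσ i]
  rcases lt_or_ge p n with hp | hp
  · rw [Nat.mod_eq_of_lt hp] at hi
    split_ifs <;> omega
  · rw [Nat.mod_eq_sub_mod hp, Nat.mod_eq_of_lt (by omega)] at hi
    split_ifs <;> omega

theorem IsSupnick.exists_centre {σ : Equiv.Perm (Fin n)} (hσ : IsSupnick σ) (i : Fin n) :
    ∃ c : ℕ, c ≡ i [MOD n] ∧ n ≤ 2 * c ∧ (2 * c = 2 * n + σ i ∨ 2 * c + 1 + σ i = 2 * n) := by
  have h_apply := hσ i
  split_ifs at h_apply with h_half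
  · exact ⟨n + i, by simp [Nat.ModEq], by omega, by omega⟩
  · exact ⟨i, rfl, by omega, by omega⟩

theorem IsSupnick.supnickArcCount_le_arcCount {σ : Equiv.Perm (Fin n)} (hσ : IsSupnick σ)
    {q l : ℕ} (hq : 2 * q + 1 ≤ n) (hl : l ≤ n) (x : Fin n) :
    supnickArcCount n (2 * q + 1) l (σ (finShift x q)) ≤
      arcCount (positionsBelow σ l) x (2 * q + 1) := by
  have h_full := card_add_le_arcCount_add (positionsBelow σ l) x hq
  rw [card_positionsBelow σ hl] at h_full
  refine max_le (by omega) ?_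
  obtain ⟨c, hc, hc_half, hc_city⟩ := hσ.exists_centre (finShift x q)
  obtain ⟨y, rfl⟩ : ∃ y, c = y + q := ⟨c - q, by omega⟩
  have hy : y ≡ x [MOD n] := Nat.ModEq.add_right_cancel' q (hc.trans (Nat.mod_modEq _ n))
  have h_subset : Ico (n - l / 2 - y) (min (2 * q + 1) (n + (l + 1) / 2 - y)) ⊆
      {d ∈ range (2 * q + 1) | finShift x d ∈ positionsBelow σ l} := by
    intro d hd
    rw [mem_Ico] at hd
    rw [mem_filter, mem_range, mem_positionsBelow]
    refine ⟨by omega, ?_⟩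
    exact hσ.apply_lt_of_mem_arc hl (p := y + d) (by omega) (by omega) (hy.add_right d).symm
  calc min (min l (2 * q + 1)) ((l + (2 * q + 1) - σ (finShift x q)) / 2)
      ≤ #(Ico (n - l / 2 - y) (min (2 * q + 1) (n + (l + 1) / 2 - y))) := by
        rw [Nat.card_Ico]
        omega
    _ ≤ arcCount (positionsBelow σ l) x (2 * q + 1) := card_le_card h_subset

/-- The level `t = supnickArcCount n m l k` makes the bound of `sum_arcCount_le` sharp. -/
theorem sum_range_supnickArcCount {m l : ℕ} (hm : m ≤ n) (hl : l ≤ n) (k : ℕ) :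
    ∑ j ∈ range k, supnickArcCount n m l j = supnickArcCount n m l k * k +
      (l - supnickArcCount n m l k) * (m - supnickArcCount n m l k) := by
  induction k with
  | zero =>
    have h_zero : l - supnickArcCount n m l 0 = 0 ∨ m - supnickArcCount n m l 0 = 0 := by
      unfold supnickArcCount
      omega
    rcases h_zero with h | h <;> simp [h]
  | succ k ih =>
    rw [sum_range_succ, ih]
    have h_le : supnickArcCount n m l k ≤ min l m := by
      unfold supnickArcCount
      omega
    have h_step : supnickArcCount n m l (k + 1) = supnickArcCount n m l k ∨
        supnickArcCount n m l k = supnickArcCount n m l (k + 1) + 1 ∧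
          l + m = k + 2 * supnickArcCount n m l k := by
      unfold supnickArcCount
      omega
    rcases h_step with h_same | ⟨h_drop, h_sum⟩
    · rw [h_same]
      ring
    · rw [h_drop] at h_le h_sum ⊢
      generalize supnickArcCount n m l (k + 1) = t at *
      obtain ⟨u, rfl⟩ : ∃ u, l = t + 1 + u := Nat.exists_eq_add_of_le (by omega)
      obtain ⟨v, rfl⟩ : ∃ v, m = t + 1 + v := Nat.exists_eq_add_of_le (by omega)
      obtain rfl : k = u + v := by omega
      rw [show t + 1 + u - t = u + 1 by omega, show t + 1 + v - t = v + 1 by omega,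
        Nat.add_sub_cancel_left, Nat.add_sub_cancel_left]
      ring

theorem IsSupnick.sum_supnickArcCount_le_nearbyCount {σ : Equiv.Perm (Fin n)} (hσ : IsSupnick σ)
    {q k l : ℕ} (hq : 2 * q + 1 ≤ n) (hk : k ≤ n) (hl : l ≤ n) :
    ∑ j ∈ range k, supnickArcCount n (2 * q + 1) l j ≤ nearbyCount q σ k l := by
  calc ∑ j ∈ range k, supnickArcCount n (2 * q + 1) l j
      = ∑ j ∈ range n, if j < k then supnickArcCount n (2 * q + 1) l j else 0 := by
        rw [← sum_filter]
        congr 1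
        grind
    _ = ∑ x, if (σ (finShift x q) : ℕ) < k then
          supnickArcCount n (2 * q + 1) l (σ (finShift x q)) else 0 := by
        rw [sum_range, sum_perm_finShift σ q fun i ↦
          if (i : ℕ) < k then supnickArcCount n (2 * q + 1) l i else 0]
    _ = ∑ x with finShift x q ∈ positionsBelow σ k,
          supnickArcCount n (2 * q + 1) l (σ (finShift x q)) := by
        simp only [sum_filter, mem_positionsBelow]
    _ ≤ nearbyCount q σ k l :=
        sum_le_sum fun x _ ↦ hσ.supnickArcCount_le_arcCount hq hl x

theorem IsSupnick.nearbyCount_le_nearbyCount {σ : Equiv.Perm (Fin n)} (hσ : IsSupnick σ)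
    (π : Equiv.Perm (Fin n)) {q k l : ℕ} (hq : 2 * q + 1 ≤ n) (hk : k ≤ n) (hl : l ≤ n) :
    nearbyCount q π k l ≤ nearbyCount q σ k l := by
  have h_level : supnickArcCount n (2 * q + 1) l k ≤ min l (2 * q + 1) ∧
      l + (2 * q + 1) ≤ n + supnickArcCount n (2 * q + 1) l k := by
    unfold supnickArcCount
    omega
  calc nearbyCount q π k l
      ≤ supnickArcCount n (2 * q + 1) l k * k + (l - supnickArcCount n (2 * q + 1) l k) *
          (2 * q + 1 - supnickArcCount n (2 * q + 1) l k) :=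
        nearbyCount_le q π hk hl (by omega) (by omega) h_level.2
    _ = ∑ j ∈ range k, supnickArcCount n (2 * q + 1) l j :=
        (sum_range_supnickArcCount hq hl k).symm
    _ ≤ nearbyCount q σ k l := hσ.sum_supnickArcCount_le_nearbyCount hq hk hl

/-! ### Comparison of sums over a Monge matrix -/

theorem sum_ite_le_castSucc_sub_succ {M : Type*} [AddCommGroup M] {N : ℕ} (u : Fin (N + 1) → M)
    (a : Fin (N + 1)) :
    ∑ k : Fin N, (if a ≤ k.castSucc then u k.castSucc - u k.succ else 0) =
      u a - u (Fin.last N) := by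
  induction N with
  | zero => simp [Fin.fin_one_eq_zero a]
  | succ N ih =>
    rw [Fin.sum_univ_castSucc]
    cases a using Fin.lastCases with
    | last => simp [Fin.le_def, Nat.not_le.mpr]
    | cast a =>
      have h_init := ih (fun i ↦ u i.castSucc) a
      simp only [Fin.castSucc_le_castSucc_iff, ← Fin.succ_castSucc] at h_init ⊢
      simp [h_init, Fin.le_last]

/-- The mixed second difference of the matrix `D` at `(k, l)`; nonpositive for Monge matrices. -/
def mixedDiff {N : ℕ} (D : Fin (N + 1) → Fin (N + 1) → ℝ) (k l : Fin N) : ℝ :=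
  D k.castSucc l.castSucc + D k.succ l.succ - D k.castSucc l.succ - D k.succ l.castSucc

theorem MongeMat.mixedDiff_nonpos {N : ℕ} {D : Fin (N + 1) → Fin (N + 1) → ℝ} (hD : MongeMat D)
    (k l : Fin N) : mixedDiff D k l ≤ 0 := by
  have h := hD _ _ _ _ k.castSucc_lt_succ l.castSucc_lt_succ
  unfold mixedDiff
  linarith

theorem eq_add_sum_mixedDiff {N : ℕ} (D : Fin (N + 1) → Fin (N + 1) → ℝ) (a b : Fin (N + 1)) :
    D a b = D a (Fin.last N) + D (Fin.last N) b - D (Fin.last N) (Fin.last N) +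
      ∑ k : Fin N, ∑ l : Fin N,
        if a ≤ k.castSucc ∧ b ≤ l.castSucc then mixedDiff D k l else 0 := by
  have h_inner (k : Fin N) :
      ∑ l : Fin N, (if b ≤ l.castSucc then mixedDiff D k l else 0) =
        (D k.castSucc b - D k.castSucc (Fin.last N)) - (D k.succ b - D k.succ (Fin.last N)) := by
    rw [sub_sub_sub_comm, ← sum_ite_le_castSucc_sub_succ (fun j ↦ D k.castSucc j - D k.succ j) b]
    refine sum_congr rfl fun l _ ↦ ?_
    congr 1
    unfold mixedDiff
    ring
  have h_outer := sum_ite_le_castSucc_sub_succ (fun i ↦ D i b - D i (Fin.last N)) a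
  simp only [← h_inner] at h_outer
  simp only [ite_and, ← ite_sum_zero, h_outer]
  ring

theorem sum_eq_add_sum_card_mul_mixedDiff {ι : Type*} {N : ℕ} (D : Fin (N + 1) → Fin (N + 1) → ℝ)
    (s : Finset ι) (f g : ι → Fin (N + 1)) :
    ∑ i ∈ s, D (f i) (g i) =
      ∑ i ∈ s, D (f i) (Fin.last N) + ∑ i ∈ s, D (Fin.last N) (g i) -
        #s * D (Fin.last N) (Fin.last N) +
      ∑ k : Fin N, ∑ l : Fin N,
        #{i ∈ s | f i ≤ k.castSucc ∧ g i ≤ l.castSucc} * mixedDiff D k l := by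
  rw [sum_congr rfl fun i _ ↦ eq_add_sum_mixedDiff D (f i) (g i), sum_add_distrib,
    sum_sub_distrib, sum_add_distrib, sum_const, nsmul_eq_mul, sum_comm]
  congr 1
  refine sum_congr rfl fun k _ ↦ ?_
  rw [sum_comm]
  refine sum_congr rfl fun l _ ↦ ?_
  rw [← sum_filter, sum_const, nsmul_eq_mul]

/-- Equality of the marginal distributions, of `f` and `f'` and of `g` and `g'`, is encoded by
sums against arbitrary test functions. -/
theorem MongeMat.sum_apply_le_sum_apply {ι : Type*} {D : Fin n → Fin n → ℝ} (hD : MongeMat D)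
    (s : Finset ι) {f g f' g' : ι → Fin n}
    (hf : ∀ u : Fin n → ℝ, ∑ i ∈ s, u (f i) = ∑ i ∈ s, u (f' i))
    (hg : ∀ u : Fin n → ℝ, ∑ i ∈ s, u (g i) = ∑ i ∈ s, u (g' i))
    (h : ∀ k l : Fin n, #{i ∈ s | f' i ≤ k ∧ g' i ≤ l} ≤ #{i ∈ s | f i ≤ k ∧ g i ≤ l}) :
    ∑ i ∈ s, D (f i) (g i) ≤ ∑ i ∈ s, D (f' i) (g' i) := by
  cases n with
  | zero => exact sum_le_sum fun i _ ↦ (f i).elim0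
  | succ N =>
    rw [sum_eq_add_sum_card_mul_mixedDiff D s f g, sum_eq_add_sum_card_mul_mixedDiff D s f' g',
      hf fun a ↦ D a (Fin.last N), hg fun b ↦ D (Fin.last N) b]
    refine add_le_add_right ?_ _
    refine sum_le_sum fun k _ ↦ sum_le_sum fun l _ ↦ ?_
    exact mul_le_mul_of_nonpos_right (mod_cast h _ _) (hD.mixedDiff_nonpos k l)

/-! ### The objective as a sum over windows -/

/-- The sum of `D` over the ordered pairs of cities whose positions in the tour `π` are at cyclic
distance at most `q`. As in `nearbyCount`, `x` is the start of the window centred at the first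
member of the pair. -/
def nearbySum (q : ℕ) (D : Fin n → Fin n → ℝ) (π : Equiv.Perm (Fin n)) : ℝ :=
  ∑ d ∈ range (2 * q + 1), ∑ x, D (π (finShift x q)) (π (finShift x d))

theorem nearbySum_eq_two_mul_stripeObj_add {D : Fin n → Fin n → ℝ}
    (hsymm : ∀ i j, D i j = D j i) (q : ℕ) (π : Equiv.Perm (Fin n)) :
    nearbySum q D π = 2 * stripeObj q D π + ∑ i, D i i := by
  induction q with
  | zero =>
    simpa [nearbySum, stripeObj] using sum_perm_finShift π 0 fun i ↦ D i i
  | succ q ih =>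
    have h_first : ∑ x, D (π (finShift x (q + 1))) (π (finShift x 0)) =
        ∑ x, D (π x) (π (finShift x (q + 1))) := by
      simp [finShift, Nat.mod_eq_of_lt, hsymm]
    have h_last : ∑ x, D (π (finShift x (q + 1))) (π (finShift x (2 * q + 1 + 1))) =
        ∑ x, D (π x) (π (finShift x (q + 1))) := by
      rw [← sum_finShift (fun x ↦ D (π x) (π (finShift x (q + 1)))) (q + 1)]
      simp only [← finShift_add, show q + 1 + (q + 1) = 2 * q + 1 + 1 by ring]
    have h_middle : ∑ d ∈ range (2 * q + 1),
        ∑ x, D (π (finShift x (q + 1))) (π (finShift x (d + 1))) = nearbySum q D π := by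
      refine sum_congr rfl fun d _ ↦ ?_
      rw [← sum_finShift (fun x ↦ D (π (finShift x q)) (π (finShift x d))) 1]
      simp only [← finShift_add, add_comm 1]
    have h_stripe : stripeObj (q + 1) D π =
        stripeObj q D π + ∑ x, D (π x) (π (finShift x (q + 1))) :=
      sum_Icc_succ_top (Nat.le_add_left 1 q) _
    rw [nearbySum, show 2 * (q + 1) + 1 = 2 * q + 1 + 1 + 1 by ring, sum_range_succ,
      sum_range_succ', h_first, h_last, h_middle, ih, h_stripe]
    ring

theorem nearbyCount_eq_card (q : ℕ) (π : Equiv.Perm (Fin n)) (k l : Fin n) :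
    nearbyCount q π (k + 1) (l + 1) = #{y ∈ range (2 * q + 1) ×ˢ (univ : Finset (Fin n)) |
      π (finShift y.2 q) ≤ k ∧ π (finShift y.2 y.1) ≤ l} := by
  simp only [nearbyCount, arcCount, card_filter, mem_positionsBelow, Nat.lt_succ_iff, sum_filter,
    sum_product_right, Fin.val_fin_le, ite_and, ite_sum_zero]

theorem MongeMat.nearbySum_le_nearbySum {D : Fin n → Fin n → ℝ} (hD : MongeMat D) {q : ℕ}
    {σ π : Equiv.Perm (Fin n)}
    (h : ∀ k ≤ n, ∀ l ≤ n, nearbyCount q π k l ≤ nearbyCount q σ k l) :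
    nearbySum q D σ ≤ nearbySum q D π := by
  simp only [nearbySum, ← sum_product']
  refine hD.sum_apply_le_sum_apply _ (fun u ↦ ?_) (fun u ↦ ?_) fun k l ↦ ?_
  · simp only [sum_product, sum_perm_finShift]
  · simp only [sum_product, sum_perm_finShift]
  · simpa only [nearbyCount_eq_card] using h (k + 1) k.isLt (l + 1) l.isLt

/-- Theorem (Burkard, Çela, Rote & Woeginger): for `q ≥ 1` and a symmetric `n×n`
Monge matrix with `n ≥ 2q+1`, the Supnick permutation `σ` (odd cities increasing,
then even cities decreasing; in 0-based terms `σ(i) = 2i` for `i < ⌈n/2⌉` and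
`σ(i) = 2(n−1−i)+1` otherwise) minimizes the `q`-stripe TSP objective. -/
theorem qStripe_supnick_monge (q n : ℕ) (hq : 1 ≤ q) (hn : 2*q+1 ≤ n)
    (D : Fin n → Fin n → ℝ) (hsymm : ∀ i j, D i j = D j i) (hM : MongeMat D)
    (σ : Equiv.Perm (Fin n))
    (hσ : ∀ i : Fin n, (σ i).val =
      if i.val < (n+1)/2 then 2*i.val else 2*(n-1-i.val)+1)
    (π : Equiv.Perm (Fin n)) :
    stripeObj q D σ ≤ stripeObj q D π := by
  have h_sum : nearbySum q D σ ≤ nearbySum q D π :=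
    hM.nearbySum_le_nearbySum fun _ hk _ hl ↦
      IsSupnick.nearbyCount_le_nearbyCount hσ π hn hk hl
  rw [nearbySum_eq_two_mul_stripeObj_add hsymm, nearbySum_eq_two_mul_stripeObj_add hsymm] at h_sum
  linarith
end

section
/- (Kalmanson) Let D be a symmetric n×n Kalmanson matrix with n ≥ 3. Then the identity permutation ⟨1,2,…,n⟩ is an optimal TSP tour: Σ_{i=1}^{n} d(i,i+1) ≤ Σ_{i=1}^{n} d(π(i),π(i+1)) for every permutation π of {1,…,n}, where indices are taken cyclically modulo n. -/
/-- The TSP tour length `∑_{i=1}^{n} d(π(i), π(i+1))`, indices cyclically modulo `n`. -/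
noncomputable def tourLen {n : ℕ} (D : Fin n → Fin n → ℝ) (π : Equiv.Perm (Fin n)) : ℝ :=
  ∑ i : Fin n, D (π i) (π (finShift i 1))

/-- `D` is a Kalmanson matrix: `d(i,j) + d(k,ℓ) ≤ d(i,k) + d(j,ℓ)` and
`d(i,ℓ) + d(j,k) ≤ d(i,k) + d(j,ℓ)` for all `i < j < k < ℓ`. -/
def KalmansonMat {n : ℕ} (D : Fin n → Fin n → ℝ) : Prop :=
  ∀ i j k l : Fin n, i < j → j < k → k < l →
    D i j + D k l ≤ D i k + D j l ∧ D i l + D j k ≤ D i k + D j l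

/-!
Insert the cities one at a time, the smallest one last. Putting `m` between the consecutive cities
`a` and `b` of a tour adds `D m a + D m b - D a b` to its length. If `m` is smaller than all cities
of the tour, the Kalmanson inequalities show that this cost is least when `a` and `b` are the
smallest and the largest city, and these are consecutive in the sorted tour.
-/

section CyclicSum

variable {α R : Type*} (D : α → α → R)

theorem sum_zipWith_cons_append_singleton [AddMonoid R] (b c : α) (t : List α) :
    (List.zipWith D (b :: t) (t ++ [c])).sum =
      (List.zipWith D (b :: t) t).sum + D ((b :: t).getLast (List.cons_ne_nil b t)) c := by
  induction t generalizing b with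
  | nil => simp
  | cons d t ih => simp [ih d, add_assoc]

/-- The length of the closed tour visiting the entries of `l` in order and returning to the first
one. It is `0` for the empty list and `D a a` for `[a]`. -/
def cyclicSum [Add R] [Zero R] (l : List α) : R :=
  (List.zipWith D l (l.rotate 1)).sum

variable [AddCommMonoid R]

theorem cyclicSum_rotate (l : List α) (k : ℕ) : cyclicSum D (l.rotate k) = cyclicSum D l := by
  have hrot : List.zipWith D (l.rotate k) ((l.rotate k).rotate 1) =
      (List.zipWith D l (l.rotate 1)).rotate k := by
    rw [List.zipWith_rotate_distrib D l (l.rotate 1) k (List.length_rotate l 1).symm,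
      List.rotate_rotate, List.rotate_rotate, add_comm]
  rw [cyclicSum, hrot]
  exact (List.rotate_perm _ k).sum_eq

theorem cyclicSum_eq_of_isRotated {l l' : List α} (h : l ~r l') :
    cyclicSum D l = cyclicSum D l' := by
  obtain ⟨k, rfl⟩ := h
  exact (cyclicSum_rotate D l k).symm

theorem cyclicSum_cons (m : α) {l : List α} (hl : l ≠ []) :
    cyclicSum D (m :: l) + D (l.getLast hl) (l.head hl) =
      cyclicSum D l + (D m (l.head hl) + D (l.getLast hl) m) := by
  obtain ⟨b, t, rfl⟩ := List.exists_cons_of_ne_nil hl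
  simp only [cyclicSum, List.rotate_cons_succ, List.rotate_zero, List.cons_append,
    List.zipWith_cons_cons (as := b :: t), List.sum_cons, sum_zipWith_cons_append_singleton,
    List.head_cons]
  abel

end CyclicSum

theorem exists_isRotated_cons_of_mem {α : Type*} {m : α} {l : List α} (h : m ∈ l) :
    ∃ r, l ~r m :: r := by
  obtain ⟨s, t, rfl⟩ := List.append_of_mem h
  exact ⟨t ++ s, List.isRotated_append⟩

section Kalmanson

variable {α R : Type*}

/-- The Kalmanson conditions for distances between cities of an arbitrary ordered type, under which
sorted tours turn out to be optimal. For `α = Fin n` and `R = ℝ` this is `KalmansonMat`. -/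
def IsKalmanson [LT α] [Add R] [LE R] (D : α → α → R) : Prop :=
  ∀ i j k l : α, i < j → j < k → k < l →
    D i j + D k l ≤ D i k + D j l ∧ D i l + D j k ≤ D i k + D j l

variable [AddCommMonoid R] [PartialOrder R] [IsOrderedCancelAddMonoid R] {D : α → α → R}

theorem IsKalmanson.insertion_cost_le_of_lt [PartialOrder α] (hD : IsKalmanson D)
    {m x a b y : α} (hmx : m < x) (hxa : x ≤ a) (hab : a < b) (hby : b ≤ y) :
    D m x + D m y + D a b ≤ D m a + D m b + D x y := by
  have far : D m y + D a b ≤ D m b + D a y := by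
    obtain rfl | hby := hby.eq_or_lt
    · rfl
    · exact (hD m a b y (hmx.trans_le hxa) hab hby).2
  have near : D m x + D a y ≤ D m a + D x y := by
    obtain rfl | hxa := hxa.eq_or_lt
    · rfl
    · exact (hD m x a y hmx hxa (hab.trans_le hby)).1
  refine le_of_add_le_add_right (a := D a y) ?_
  calc D m x + D m y + D a b + D a y
      = D m y + D a b + (D m x + D a y) := by abel
    _ ≤ D m b + D a y + (D m a + D x y) := add_le_add far near
    _ = D m a + D m b + D x y + D a y := by abel

variable [LinearOrder α]

theorem IsKalmanson.insertion_cost_le (hD : IsKalmanson D) (hsymm : ∀ i j, D i j = D j i)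
    {m x a b y : α} (hmx : m < x) (ha : a ∈ Set.Icc x y) (hb : b ∈ Set.Icc x y) (hab : a ≠ b) :
    D m x + D m y + D a b ≤ D m a + D m b + D x y := by
  obtain hab | hba := hab.lt_or_gt
  · exact hD.insertion_cost_le_of_lt hmx ha.1 hab hb.2
  · rw [hsymm a b, add_comm (D m a)]
    exact hD.insertion_cost_le_of_lt hmx hb.1 hba ha.2

theorem IsKalmanson.cyclicSum_cons_le (hD : IsKalmanson D) (hsymm : ∀ i j, D i j = D j i)
    {m : α} {l r : List α} (hml : (m :: l).SortedLT) (hrl : r.Perm l)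
    (hle : cyclicSum D l ≤ cyclicSum D r) : cyclicSum D (m :: l) ≤ cyclicSum D (m :: r) := by
  obtain ⟨hm, hl⟩ := List.pairwise_cons.mp hml.pairwise
  obtain rfl | hr₀ := eq_or_ne r []
  · rw [hrl.nil_eq]
  have hl₀ : l ≠ [] := by
    rintro rfl
    exact hr₀ hrl.eq_nil
  have mem_Icc {c : α} (hc : c ∈ r) : c ∈ Set.Icc (l.head hl₀) (l.getLast hl₀) :=
    have hl' := hl.imp le_of_lt
    ⟨hl'.rel_head (hrl.subset hc), hl'.rel_getLast (hrl.subset hc)⟩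
  obtain heq | hne := eq_or_ne (r.head hr₀) (r.getLast hr₀)
  · obtain ⟨c, rfl⟩ := (List.Nodup.head_eq_getLast_iff hr₀ (hrl.nodup_iff.mpr hl.nodup)).mp heq
    rw [hrl.singleton_eq]
  have insertion := hD.insertion_cost_le hsymm (hm _ (List.head_mem hl₀))
    (mem_Icc (List.head_mem hr₀)) (mem_Icc (List.getLast_mem hr₀)) hne
  have length_insert (s : List α) (hs : s ≠ []) :
      cyclicSum D (m :: s) + D (s.head hs) (s.getLast hs) =
        cyclicSum D s + (D m (s.head hs) + D m (s.getLast hs)) := by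
    rw [hsymm (s.head hs), hsymm m (s.getLast hs), cyclicSum_cons]
  set x := l.head hl₀
  set y := l.getLast hl₀
  set a := r.head hr₀
  set b := r.getLast hr₀
  refine le_of_add_le_add_right (a := D x y + D a b) ?_
  calc cyclicSum D (m :: l) + (D x y + D a b)
      = cyclicSum D l + (D m x + D m y + D a b) := by
        rw [← add_assoc, length_insert l hl₀, add_assoc]
    _ ≤ cyclicSum D r + (D m a + D m b + D x y) := add_le_add hle insertion
    _ = cyclicSum D (m :: r) + (D x y + D a b) := by
        rw [← add_assoc, ← length_insert r hr₀, add_assoc, add_comm (D a b)]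

theorem kalmanson_tsp_identity_optimal_general (hD : IsKalmanson D)
    (hsymm : ∀ i j, D i j = D j i) {l l' : List α} (hl : l.SortedLT) (hl' : l'.Perm l) :
    cyclicSum D l ≤ cyclicSum D l' := by
  induction l generalizing l' with
  | nil => rw [hl'.eq_nil]
  | cons m l ih =>
    obtain ⟨r, hr⟩ := exists_isRotated_cons_of_mem (hl'.mem_iff.mpr List.mem_cons_self)
    have hrl : r.Perm l := (hr.perm.symm.trans hl').cons_inv
    rw [cyclicSum_eq_of_isRotated D hr]
    exact hD.cyclicSum_cons_le hsymm hl hrl (ih hl.pairwise.of_cons.sortedLT hrl)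

end Kalmanson

theorem tourLen_eq_cyclicSum {n : ℕ} (D : Fin n → Fin n → ℝ) (π : Equiv.Perm (Fin n)) :
    tourLen D π = cyclicSum D (List.ofFn π) := by
  have hzip : List.zipWith D (List.ofFn π) ((List.ofFn π).rotate 1) =
      List.ofFn fun i => D (π i) (π (finShift i 1)) :=
    List.ext_getElem (by simp) fun i _ _ => by simp [List.getElem_rotate, finShift]
  rw [cyclicSum, hzip, List.sum_ofFn, tourLen]

/-- Theorem (Kalmanson): for a symmetric `n×n` Kalmanson matrix with `n ≥ 3`, the
identity permutation is an optimal TSP tour. -/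
theorem kalmanson_tsp_identity_optimal (n : ℕ) (hn : 3 ≤ n)
    (D : Fin n → Fin n → ℝ) (hsymm : ∀ i j, D i j = D j i) (hK : KalmansonMat D)
    (π : Equiv.Perm (Fin n)) :
    tourLen D (Equiv.refl (Fin n)) ≤ tourLen D π := by
  rw [tourLen_eq_cyclicSum, tourLen_eq_cyclicSum]
  exact kalmanson_tsp_identity_optimal_general hK hsymm
    (List.ofFn_id n ▸ List.sortedLT_finRange n) (π.ofFn_comp_perm id)
end
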